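/- Let K be a countably infinite field and let A, B ⊆ K be sets with positive upper Banach density (with respect to the additive group (K,+)). Then for every finite set Q ⊆ K there exists (a_Q, b_Q) ∈ A × B such that Q ⊆ (A − a_Q) · (B − b_Q). In particular, K = (A − A) · (B − B). -/

import Mathlib

/-!
Let `E = A × B`. Fix an invariant mean `m` on `K × K` giving `E` positive mass and an invariant mean
on `Kˣ`, and in the `L²` space of their product consider the functions
`u_p (t, w) = 1_E (w + t • p)`, where `t • (a, b) = (ta, t⁻¹b)` is a hyperbolic rotation.
Translations and rotations preserve the mean, and for `p₁ ≠ p'₁` the difference `p - p'` is a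
rotation of `(1, s)`, where `s = (p₁ - p'₁) (p₂ - p'₂)`; hence `⟪u_p, u_p'⟫ = ψ s` for a function
`ψ` on `K`.

A bounded family whose pairwise inner products tend to zero tends weakly to zero, as in
van der Corput's lemma. Applied to the differences `u_(x, 0) - u_(y, 0)`, this shows that `ψ` has a
limit along the cofinite filter. Then for `a, b ≠ 0` the vectors `u_(x, a/x) - u_(x, b/x)` are
asymptotically orthogonal, so they tend weakly to zero, and pairing them with `u_0` gives
`ψ a = ψ b`. The constant value of `ψ` on `Kˣ` is at least `(m E) ^ 2 > 0`, so every `q` is the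
product of the coordinates of a difference of two points of `E`.

The same holds for every subset of `K × K` of positive mean. For fixed `q`, the points `p ∈ E` such
that no `p' ∈ E` satisfies `(p'₁ - p₁) (p'₂ - p₂) = q` form a set with no such pair, which therefore
has mean zero; so finitely many of these sets do not exhaust `E`.
-/

open Filter Topology Pointwise
open scoped Classical

/-- A (additive) Følner sequence in a countable abelian group. -/
def IsAddFolner {A : Type*} [AddCommGroup A] (F : ℕ → Finset A) : Prop :=
  (∀ n, (F n).Nonempty) ∧
    ∀ a : A, Tendsto
      (fun n => ((F n ∩ (F n).image (· + a)).card : ℝ) / ((F n).card : ℝ)) atTop (𝓝 1)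

/-- `E` has positive upper Banach density. -/
def PosUpperBanachDensity {A : Type*} [AddCommGroup A] (E : Set A) : Prop :=
  ∃ F : ℕ → Finset A, IsAddFolner F ∧
    0 < limsup (fun n => (((F n).filter (· ∈ E)).card : ℝ) / ((F n).card : ℝ)) atTop

open LinearMap (BilinForm)
open scoped BoundedContinuousFunction

section AlmostOrthogonal

variable {V : Type*} [AddCommGroup V] [Module ℝ V] {B : BilinForm ℝ V}

lemma apply_sum_range_self_le {y : ℕ → V} {C η : ℝ} (hC : ∀ i, B (y i) (y i) ≤ C)
    (hη : Pairwise fun i j => B (y i) (y j) ≤ η) (N : ℕ) :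
    B (∑ i ∈ Finset.range N, y i) (∑ i ∈ Finset.range N, y i) ≤ N * (C - η) + N ^ 2 * η := by
  calc B (∑ i ∈ Finset.range N, y i) (∑ i ∈ Finset.range N, y i)
      = ∑ i ∈ Finset.range N, ∑ j ∈ Finset.range N, B (y i) (y j) := by
        simp only [map_sum, LinearMap.sum_apply]
        exact Finset.sum_comm
    _ ≤ ∑ i ∈ Finset.range N, ∑ j ∈ Finset.range N, ((if i = j then C - η else 0) + η) := by
        refine Finset.sum_le_sum fun i _ => Finset.sum_le_sum fun j _ => ?_
        split_ifs with hij
        · simpa [← hij] using hC i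
        · simpa using hη hij
    _ = N * (C - η) + N ^ 2 * η := by
        simp only [Finset.sum_add_distrib, Finset.sum_ite_eq, Finset.mem_range, Finset.sum_const,
          Finset.card_range, nsmul_eq_mul]
        rw [Finset.sum_congr rfl fun i hi => if_pos (Finset.mem_range.1 hi)]
        simp only [Finset.sum_const, Finset.card_range, nsmul_eq_mul]
        ring

lemma sq_le_mul_apply_self_of_pairwise_le (hB : B.IsPosSemidef) {y : ℕ → V} {v : V} {C η ε : ℝ}
    (hε : 0 ≤ ε) (hC : ∀ i, B (y i) (y i) ≤ C) (hη : Pairwise fun i j => B (y i) (y j) ≤ η)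
    (hv : ∀ i, ε ≤ B (y i) v) : ε ^ 2 ≤ η * B v v := by
  have cauchy_schwarz (N : ℕ) :
      (N * ε) ^ 2 ≤ (N * (C - η) + N ^ 2 * η) * B v v := by
    have hsum : N * ε ≤ B (∑ i ∈ Finset.range N, y i) v := by
      simpa [LinearMap.sum_apply] using Finset.card_nsmul_le_sum (.range N) _ ε fun i _ => hv i
    calc (N * ε) ^ 2 ≤ B (∑ i ∈ Finset.range N, y i) v ^ 2 := by gcongr
      _ ≤ _ := B.apply_sq_le_of_symm hB.nonneg (BilinForm.isSymm_iff.1 hB.isSymm) _ _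
      _ ≤ _ := mul_le_mul_of_nonneg_right (apply_sum_range_self_le hC hη N) (hB.nonneg v)
  have hlim : Tendsto (fun N : ℕ => (C - η) * B v v / N + η * B v v) atTop (𝓝 (η * B v v)) := by
    simpa using (tendsto_const_div_atTop_nhds_zero_nat ((C - η) * B v v)).add_const (η * B v v)
  refine ge_of_tendsto hlim ?_
  filter_upwards [eventually_gt_atTop 0] with N hN
  have hN' : (0 : ℝ) < N := Nat.cast_pos.2 hN
  refine le_of_mul_le_mul_left ?_ (pow_pos hN' 2)
  calc (N : ℝ) ^ 2 * ε ^ 2 = (N * ε) ^ 2 := by ring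
    _ ≤ (N * (C - η) + N ^ 2 * η) * B v v := cauchy_schwarz N
    _ = N ^ 2 * ((C - η) * B v v / N + η * B v v) := by field_simp

variable {ι : Type*} {l : Filter ι} {y : ι → V} {C : ℝ}

lemma tendsto_apply_zero_of_eventually (hB : B.IsPosSemidef)
    (hC : ∀ i, B (y i) (y i) ≤ C)
    (hy : ∀ᶠ i in l, Tendsto (fun j => B (y i) (y j)) l (𝓝 0)) (v : V) :
    Tendsto (fun j => B (y j) v) l (𝓝 0) := by
  have upper (v : V) {ε : ℝ} (hε : 0 < ε) : ∀ᶠ j in l, B (y j) v < ε := by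
    -- Otherwise a greedy choice gives an almost orthogonal sequence correlating with `v`.
    by_contra hfreq
    obtain ⟨η, hη, hηε⟩ := exists_pos_mul_lt (pow_pos hε 2) (B v v)
    obtain ⟨x, hx, hxx⟩ := exists_seq_of_forall_finset_exists
      (fun i => ε ≤ B (y i) v ∧ Tendsto (fun j => B (y i) (y j)) l (𝓝 0))
      (fun i j => B (y i) (y j) ≤ η) fun s hs => by
        have hnext : ∀ᶠ j in l, ∀ i ∈ s, B (y i) (y j) ≤ η :=
          (eventually_all_finset s).2 fun i hi => (hs i hi).2.eventually_le_const hη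
        obtain ⟨j, hj, hj', hjs⟩ :=
          ((not_eventually.1 hfreq).and_eventually (hy.and hnext)).exists
        exact ⟨j, ⟨not_lt.1 hj, hj'⟩, hjs⟩
    have hpair : Pairwise fun m n => B (y (x m)) (y (x n)) ≤ η := fun m n hmn => by
      rcases lt_or_gt_of_ne hmn with h | h
      · exact hxx m n h
      · rw [hB.isSymm.eq]
        exact hxx n m h
    have := sq_le_mul_apply_self_of_pairwise_le hB hε.le (fun n => hC (x n)) hpair fun n => (hx n).1
    linarith
  refine tendsto_order.2 ⟨fun a ha => ?_, fun a ha => upper v ha⟩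
  filter_upwards [upper (-v) (neg_pos.2 ha)] with j hj
  simpa using hj

lemma apply_sub_self_le (hB : B.IsPosSemidef) (hC : ∀ i, B (y i) (y i) ≤ C) (i j : ι) :
    B (y i - y j) (y i - y j) ≤ 4 * C := by
  have h := hB.nonneg (y i + y j)
  simp only [map_sub, map_add, LinearMap.sub_apply, LinearMap.add_apply] at h ⊢
  linarith [hC i, hC j]

lemma exists_tendsto_apply_of_eventually [l.NeBot] (hB : B.IsPosSemidef)
    (hC : ∀ i, B (y i) (y i) ≤ C)
    (hy : ∀ᶠ i in l, ∃ c, Tendsto (fun j => B (y i) (y j)) l (𝓝 c)) (v : V) :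
    ∃ γ, Tendsto (fun j => B (y j) v) l (𝓝 γ) := by
  -- The differences `y i - y j` are asymptotically orthogonal to each other along `l ×ˢ l`.
  have hlim : Tendsto (fun p : ι × ι => B (y p.1 - y p.2) v) (l ×ˢ l) (𝓝 0) := by
    refine tendsto_apply_zero_of_eventually hB (y := fun p : ι × ι => y p.1 - y p.2)
      (fun p => apply_sub_self_le hB hC p.1 p.2) ?_ v
    filter_upwards [hy.prod_mk hy] with p ⟨⟨c, hc⟩, ⟨d, hd⟩⟩
    simpa [Function.comp_def] using ((hc.comp tendsto_fst).sub (hc.comp tendsto_snd)).sub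
      ((hd.comp tendsto_fst).sub (hd.comp tendsto_snd))
  rw [← cauchy_map_iff_exists_tendsto, cauchy_map_iff, uniformity_eq_comap_nhds_zero_swapped,
    tendsto_comap_iff]
  exact ⟨inferInstance, by simpa [Function.comp_def] using hlim⟩

end AlmostOrthogonal

section HyperbolicGram

variable {K : Type*} [Field K]

lemma tendsto_sub_mul_div_sub_div_cofinite {x a b : K} (hx : x ≠ 0) (ha : a ≠ 0) :
    Tendsto (fun y => (x - y) * (a / x - b / y)) cofinite cofinite := by
  refine Tendsto.cofinite_of_finite_preimage_singleton fun s => ?_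
  by_cases hs : ∃ z ≠ 0, (x - z) * (a / x - b / z) = s
  · obtain ⟨z, hz, hzs⟩ := hs
    refine (Set.toFinite {0, z, b * x ^ 2 / (a * z)}).subset fun y (hy : _ = s) => ?_
    simp only [Set.mem_insert_iff, Set.mem_singleton_iff]
    refine or_iff_not_imp_left.2 fun hy0 => ?_
    have hyz : (z - y) * (b * x ^ 2 - y * (a * z)) = 0 := by
      have h := hzs.trans hy.symm
      field_simp at h
      linear_combination h
    rcases mul_eq_zero.1 hyz with h | h
    · exact .inl (sub_eq_zero.1 h).symm
    · exact .inr (eq_div_of_mul_eq (mul_ne_zero ha hz) (sub_eq_zero.1 h).symm)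
  · push Not at hs
    exact (Set.finite_singleton 0).subset fun y hy => by_contra fun hy0 => hs y hy0 hy

variable {V : Type*} [AddCommGroup V] [Module ℝ V]

/-- The Gram matrix of the vectors `u p` is `ψ` of the hyperbolic form `(a, b) ↦ ab`, evaluated at
differences. Pairs of points on a common vertical line are exempt, since a difference `(0, b)` is
not of the form `(t, t⁻¹s)`. -/
def HasHyperbolicGram (B : BilinForm ℝ V) (u : K × K → V) (ψ : K → ℝ) : Prop :=
  ∀ p q, p.1 ≠ q.1 → B (u p) (u q) = ψ ((p.1 - q.1) * (p.2 - q.2))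

namespace HasHyperbolicGram

variable [Infinite K] {B : BilinForm ℝ V} {u : K × K → V} {ψ : K → ℝ} {C : ℝ}

lemma exists_tendsto_cofinite (hψ : HasHyperbolicGram B u ψ) (hB : B.IsPosSemidef)
    (hC : ∀ p, B (u p) (u p) ≤ C) : ∃ γ, Tendsto ψ cofinite (𝓝 γ) := by
  have hu (x : K) : Tendsto (fun y => B (u (x, 0)) (u (y, 0))) cofinite (𝓝 (ψ 0)) := by
    refine tendsto_const_nhds.congr' ?_
    filter_upwards [eventually_cofinite_ne x] with y hy
    simp [hψ (x, 0) (y, 0) hy.symm]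
  obtain ⟨γ, hγ⟩ := exists_tendsto_apply_of_eventually hB (y := fun x => u (x, 0))
    (fun x => hC (x, 0)) (.of_forall fun x => ⟨ψ 0, hu x⟩) (u (0, -1))
  refine ⟨γ, hγ.congr' ?_⟩
  filter_upwards [eventually_cofinite_ne 0] with x hx
  simp [hψ (x, 0) (0, -1) hx]

lemma eq_of_ne_zero (hψ : HasHyperbolicGram B u ψ) (hB : B.IsPosSemidef)
    (hC : ∀ p, B (u p) (u p) ≤ C) {a b : K} (ha : a ≠ 0) (hb : b ≠ 0) : ψ a = ψ b := by
  obtain ⟨γ, hγ⟩ := hψ.exists_tendsto_cofinite hB hC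
  let d (x : K) : V := u (x, a / x) - u (x, b / x)
  have hd (x : K) : B (d x) (d x) ≤ 4 * C := apply_sub_self_le hB hC _ _
  have hlim {x : K} (hx : x ≠ 0) {c e : K} (hc : c ≠ 0) :
      Tendsto (fun y => B (u (x, c / x)) (u (y, e / y))) cofinite (𝓝 γ) := by
    refine (hγ.comp (tendsto_sub_mul_div_sub_div_cofinite (b := e) hx hc)).congr' ?_
    filter_upwards [eventually_cofinite_ne x] with y hy
    exact (hψ (x, c / x) (y, e / y) hy.symm).symm
  have hdd : ∀ᶠ x in cofinite, Tendsto (fun y => B (d x) (d y)) cofinite (𝓝 0) := by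
    filter_upwards [eventually_cofinite_ne 0] with x hx
    simpa only [d, map_sub, LinearMap.sub_apply, sub_self] using
      ((hlim hx ha (e := a)).sub (hlim hx hb (e := a))).sub
        ((hlim hx ha (e := b)).sub (hlim hx hb (e := b)))
  have hd0 : Tendsto (fun x => B (d x) (u 0)) cofinite (𝓝 (ψ a - ψ b)) := by
    refine tendsto_const_nhds.congr' ?_
    filter_upwards [eventually_cofinite_ne 0] with x hx
    simp [d, hψ (x, _) 0 hx, mul_div_cancel₀ _ hx]
  exact sub_eq_zero.1
    (tendsto_nhds_unique hd0 (tendsto_apply_zero_of_eventually hB hd hdd (u 0)))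

lemma sq_le_mul_apply_self (hψ : HasHyperbolicGram B u ψ) (hB : B.IsPosSemidef)
    (hC : ∀ p, B (u p) (u p) ≤ C) {v : V} {ε : ℝ} (hε : 0 ≤ ε)
    (hv : ∀ p, ε ≤ B (u p) v) {q : K} (hq : q ≠ 0) : ε ^ 2 ≤ ψ q * B v v := by
  let x := Infinite.natEmbedding K
  refine sq_le_mul_apply_self_of_pairwise_le hB hε (y := fun i => u (x i, x i)) (fun i => hC _)
    (fun i j hij => ?_) fun i => hv _
  have hx : x i ≠ x j := x.injective.ne hij
  exact ((hψ _ _ hx).trans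
    (hψ.eq_of_ne_zero hB hC (mul_self_ne_zero.2 (sub_ne_zero.2 hx)) hq)).le

end HasHyperbolicGram

end HyperbolicGram

/-- Means on `X`: the normalized positive linear functionals on the bounded continuous functions,
which on a discrete space are the finitely additive probability measures. -/
structure Mean (X : Type*) [TopologicalSpace X] extends (X →ᵇ ℝ) →ₗ[ℝ] ℝ where
  map_nonneg' : ∀ f, 0 ≤ f → 0 ≤ toFun f
  map_one' : toFun 1 = 1

namespace Mean

variable {ι X Y : Type*} [TopologicalSpace X] [TopologicalSpace Y]

instance : FunLike (Mean X) (X →ᵇ ℝ) ℝ where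
  coe m := m.toFun
  coe_injective := fun ⟨_, _, _⟩ ⟨_, _, _⟩ h => by congr; exact DFunLike.coe_injective h

instance : LinearMapClass (Mean X) ℝ (X →ᵇ ℝ) ℝ where
  map_add m := m.map_add'
  map_smulₛₗ m := m.map_smul'

@[ext]
lemma ext {m n : Mean X} (h : ∀ f, m f = n f) : m = n := DFunLike.ext m n h

lemma map_nonneg (m : Mean X) {f : X →ᵇ ℝ} (hf : 0 ≤ f) : 0 ≤ m f := m.map_nonneg' f hf

@[simp]
lemma map_one (m : Mean X) : m 1 = 1 := m.map_one'

lemma mono (m : Mean X) {f g : X →ᵇ ℝ} (hfg : f ≤ g) : m f ≤ m g := by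
  simpa [map_sub] using m.map_nonneg (sub_nonneg.2 hfg)

lemma exists_pos_of_apply_pos {m : Mean X} {f : X →ᵇ ℝ} (hf : 0 < m f) : ∃ x, 0 < f x := by
  by_contra! h
  exact hf.not_ge ((m.mono (g := 0) h).trans_eq (map_zero m))

lemma abs_apply_le_norm (m : Mean X) (f : X →ᵇ ℝ) : |m f| ≤ ‖f‖ := by
  have h : m (‖f‖ • 1) = ‖f‖ := by simp
  rw [abs_le, ← h, ← map_neg]
  exact ⟨m.mono fun x => by simpa using (abs_le.1 (f.norm_coe_le_norm x)).1,
    m.mono fun x => by simpa using (abs_le.1 (f.norm_coe_le_norm x)).2⟩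

/-- The point mass at `x`. -/
def dirac (x : X) : Mean X where
  toFun f := f x
  map_add' _ _ := rfl
  map_smul' _ _ := rfl
  map_nonneg' _ hf := hf x
  map_one' := rfl

@[simp]
lemma dirac_apply (x : X) (f : X →ᵇ ℝ) : dirac x f = f x := rfl

/-- The pushforward of a mean under a continuous map; a mean `m` is invariant under `σ` when
`m.map σ = m`. -/
def map (σ : C(X, Y)) (m : Mean X) : Mean Y where
  toFun f := m (f.compContinuous σ)
  map_add' f g := map_add m (f.compContinuous σ) (g.compContinuous σ)
  map_smul' c f := map_smul m c (f.compContinuous σ)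
  map_nonneg' _ hf := m.map_nonneg fun x => hf (σ x)
  map_one' := m.map_one

@[simp]
lemma map_apply (σ : C(X, Y)) (m : Mean X) (f : Y →ᵇ ℝ) : m.map σ f = m (f.compContinuous σ) := rfl

/-- The arithmetic mean of a nonempty finite family of means. -/
noncomputable def average (s : Finset ι) (hs : s.Nonempty) (m : ι → Mean X) : Mean X where
  toFun f := (∑ i ∈ s, m i f) / s.card
  map_add' f g := by simp only [map_add, Finset.sum_add_distrib, add_div]
  map_smul' c f := by simp only [map_smul, ← Finset.smul_sum, smul_div_assoc, RingHom.id_apply]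
  map_nonneg' f hf :=
    div_nonneg (Finset.sum_nonneg fun i _ => (m i).map_nonneg hf) s.card.cast_nonneg
  map_one' := by simp [hs.ne_empty]

@[simp]
lemma average_apply (s : Finset ι) (hs : s.Nonempty) (m : ι → Mean X) (f : X →ᵇ ℝ) :
    average s hs m f = (∑ i ∈ s, m i f) / s.card := rfl

lemma exists_tendsto (U : Ultrafilter ι) (m : ι → Mean X) :
    ∃ m' : Mean X, ∀ f, Tendsto (fun i => m i f) U (𝓝 (m' f)) := by
  have hlim (f : X →ᵇ ℝ) : ∃ c, Tendsto (fun i => m i f) U (𝓝 c) := by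
    obtain ⟨c, -, hc⟩ := isCompact_Icc.ultrafilter_le_nhds (U.map fun i => m i f)
      (tendsto_principal.2 (.of_forall fun i => abs_le.1 ((m i).abs_apply_le_norm f)))
    exact ⟨c, hc⟩
  choose L hL using hlim
  refine ⟨⟨⟨⟨L, fun f g => ?_⟩, fun c f => ?_⟩, fun f hf => ?_, ?_⟩, hL⟩
  · exact tendsto_nhds_unique (by simpa using hL (f + g)) ((hL f).add (hL g))
  · exact tendsto_nhds_unique (by simpa using hL (c • f)) ((hL f).const_mul c)
  · exact ge_of_tendsto' (hL f) fun i => (m i).map_nonneg hf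
  · exact tendsto_nhds_unique (hL 1) (by simp)

lemma map_eq_of_tendsto {l : Filter ι} [l.NeBot] {m : ι → Mean X} {m' : Mean X} {σ : C(X, X)}
    (hm : ∀ f, Tendsto (fun i => m i f) l (𝓝 (m' f)))
    (hσ : ∀ f, Tendsto (fun i => (m i).map σ f - m i f) l (𝓝 0)) : m'.map σ = m' := by
  ext f
  exact sub_eq_zero.1 (tendsto_nhds_unique ((hm (f.compContinuous σ)).sub (hm f)) (hσ f))

lemma map_average (s : Finset ι) (hs : s.Nonempty) (m : ι → Mean X) (σ : C(X, Y)) :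
    (average s hs m).map σ = average s hs fun i => (m i).map σ := by
  ext f
  simp

lemma average_map_iterate_sub (m : Mean X) (σ : C(X, X)) (n : ℕ) (f : X →ᵇ ℝ) :
    ((average (.range (n + 1)) (by simp) fun k => (map σ)^[k] m).map σ f -
      average (.range (n + 1)) (by simp) (fun k => (map σ)^[k] m) f) =
      ((map σ)^[n + 1] m f - m f) / (n + 1 : ℕ) := by
  rw [map_average, average_apply, average_apply, ← sub_div, ← Finset.sum_sub_distrib]
  simp only [← Function.iterate_succ_apply' (map σ)]
  rw [Finset.sum_range_sub fun k => (map σ)^[k] m f]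
  simp

lemma exists_map_eq_of_commute (m : Mean X) (σ : C(X, X)) :
    ∃ m' : Mean X, m'.map σ = m' ∧ ∀ τ, σ.comp τ = τ.comp σ → m.map τ = m → m'.map τ = m' := by
  let avg (n : ℕ) : Mean X := average (.range (n + 1)) (by simp) fun k => (map σ)^[k] m
  obtain ⟨m', hm'⟩ := exists_tendsto (hyperfilter ℕ) avg
  refine ⟨m', map_eq_of_tendsto hm' fun f => ?_, fun τ hτ hm => map_eq_of_tendsto hm' fun f => ?_⟩
  · have hlim : Tendsto (fun n : ℕ => 2 * ‖f‖ / (n + 1 : ℕ)) atTop (𝓝 0) :=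
      (tendsto_const_div_atTop_nhds_zero_nat _).comp (tendsto_add_atTop_nat 1)
    refine (squeeze_zero_norm (fun n => ?_) hlim).mono_left Nat.hyperfilter_le_atTop
    rw [average_map_iterate_sub, norm_div, Real.norm_natCast, Real.norm_eq_abs]
    gcongr
    linarith [abs_sub ((map σ)^[n + 1] m f) (m f), abs_apply_le_norm m f,
      abs_apply_le_norm ((map σ)^[n + 1] m) f]
  · have hcomm : Function.Commute (map τ) (map σ) := fun n => by
      ext f
      exact congr_arg n (congr_arg (fun ρ => f.compContinuous ρ) hτ.symm)
    have hinv (n : ℕ) : (avg n).map τ = avg n := by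
      simp only [avg, map_average, hcomm.iterate_right _ _, hm]
    simp [hinv]

lemma exists_forall_map_eq_of_commute [Nonempty X] (σ : ι → C(X, X))
    (hσ : ∀ i j, (σ i).comp (σ j) = (σ j).comp (σ i)) : ∃ m : Mean X, ∀ i, m.map (σ i) = m := by
  have hfin (s : Finset ι) : ∃ m : Mean X, ∀ i ∈ s, m.map (σ i) = m := by
    induction s using Finset.induction_on with
    | empty => exact ⟨dirac (Classical.arbitrary X), by simp⟩
    | insert i s _ ih =>
      obtain ⟨m, hm⟩ := ih
      obtain ⟨m', hi, hm'⟩ := exists_map_eq_of_commute m (σ i)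
      exact ⟨m', (Finset.forall_mem_insert _ _ _).2 ⟨hi, fun j hj => hm' _ (hσ i j) (hm j hj)⟩⟩
  choose m hm using hfin
  obtain ⟨m', hm'⟩ := exists_tendsto (Ultrafilter.of atTop) m
  refine ⟨m', fun i => map_eq_of_tendsto hm' fun _ => tendsto_const_nhds.congr' ?_⟩
  filter_upwards [Ultrafilter.of_le atTop (eventually_ge_atTop {i})] with s hs
  rw [hm s i (hs (Finset.mem_singleton_self i)), sub_self]

lemma exists_forall_map_mulRight_eq (G : Type*) [CommGroup G] [TopologicalSpace G]
    [ContinuousMul G] : ∃ m : Mean G, ∀ g, m.map (.mulRight g) = m :=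
  exists_forall_map_eq_of_commute _ fun g h => by
    ext x
    exact mul_right_comm x h g

/-- The operator integrating a bounded function on `X × Y` over the second variable; since the mean
over `Y` need not depend continuously on the first one, `X` is required to be discrete. -/
noncomputable def fiberwise [DiscreteTopology X] (n : Mean Y) : (X × Y →ᵇ ℝ) →ₗ[ℝ] (X →ᵇ ℝ) where
  toFun f := .ofNormedAddCommGroupDiscrete
    (fun x => n (f.compContinuous (.prodMk (.const Y x) (.id Y)))) ‖f‖
    fun _ => (n.abs_apply_le_norm _).trans (f.norm_compContinuous_le _)
  map_add' f g := by
    ext x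
    exact map_add n (f.compContinuous _) (g.compContinuous _)
  map_smul' c f := by
    ext x
    exact map_smul n c (f.compContinuous _)

@[simp]
lemma fiberwise_apply [DiscreteTopology X] (n : Mean Y) (f : X × Y →ᵇ ℝ) (x : X) :
    n.fiberwise f x = n (f.compContinuous (.prodMk (.const Y x) (.id Y))) := rfl

/-- The product mean `m ⊗ n`, integrating first over `Y` and then over `X`. -/
noncomputable def prod [DiscreteTopology X] (m : Mean X) (n : Mean Y) : Mean (X × Y) where
  toLinearMap := m.toLinearMap ∘ₗ n.fiberwise
  map_nonneg' _ hf := m.map_nonneg fun x => n.map_nonneg fun y => hf (x, y)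
  map_one' := by
    have h : n.fiberwise 1 = (1 : X →ᵇ ℝ) := by
      ext
      exact n.map_one
    exact (congr_arg m h).trans m.map_one

lemma prod_apply [DiscreteTopology X] (m : Mean X) (n : Mean Y) (f : X × Y →ᵇ ℝ) :
    m.prod n f = m (n.fiberwise f) := rfl

lemma map_prod_eq_of_skew [DiscreteTopology X] {m : Mean X} {n : Mean Y} {σ : C(X, X)}
    {τ : X → C(Y, Y)} {ρ : C(X × Y, X × Y)} (hρ : ∀ x y, ρ (x, y) = (σ x, τ x y))
    (hσ : m.map σ = m) (hτ : ∀ x, n.map (τ x) = n) : (m.prod n).map ρ = m.prod n := by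
  ext f
  have hfib : n.fiberwise (f.compContinuous ρ) = (n.fiberwise f).compContinuous σ := by
    ext x
    rw [fiberwise_apply, BoundedContinuousFunction.compContinuous_apply, fiberwise_apply]
    conv_rhs => rw [← hτ x, map_apply]
    congr 1
    ext y
    exact congr_arg f (hρ x y)
  rw [map_apply, prod_apply, hfib, ← map_apply, hσ, prod_apply]

lemma map_addRight_prod_eq [AddGroup X] [DiscreteTopology X] [AddGroup Y] [ContinuousAdd Y]
    {m : Mean X} {n : Mean Y} (hm : ∀ x, m.map (.addRight x) = m)
    (hn : ∀ y, n.map (.addRight y) = n) (r : X × Y) : (m.prod n).map (.addRight r) = m.prod n :=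
  map_prod_eq_of_skew (τ := fun _ => .addRight r.2) (fun _ _ => rfl) (hm r.1) fun _ => hn r.2

lemma prod_indicator_prod [DiscreteTopology X] (m : Mean X) (n : Mean Y) {A : Set X} {B : Set Y}
    (hA : IsClopen A) (hB : IsClopen B) :
    m.prod n (.indicator (A ×ˢ B) (hA.prod hB)) = m (.indicator A hA) * n (.indicator B hB) := by
  have hfib : n.fiberwise (.indicator (A ×ˢ B) (hA.prod hB)) =
      n (.indicator B hB) • BoundedContinuousFunction.indicator A hA := by
    ext x
    have hslice : (BoundedContinuousFunction.indicator (A ×ˢ B) (hA.prod hB)).compContinuous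
        (.prodMk (.const Y x) (.id Y)) =
        BoundedContinuousFunction.indicator A hA x • BoundedContinuousFunction.indicator B hB := by
      ext y
      by_cases hx : x ∈ A <;> by_cases hy : y ∈ B <;> simp [hx, hy]
    rw [fiberwise_apply, hslice, map_smul]
    simp [mul_comm]
  rw [prod_apply, hfib, map_smul, smul_eq_mul, mul_comm]

/-- The `L²` inner product of a mean. -/
noncomputable def mulForm (m : Mean X) : BilinForm ℝ (X →ᵇ ℝ) :=
  (LinearMap.mul ℝ (X →ᵇ ℝ)).compr₂ m.toLinearMap

lemma mulForm_apply (m : Mean X) (f g : X →ᵇ ℝ) : m.mulForm f g = m (f * g) := rfl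

lemma mulForm_compContinuous {m : Mean X} {σ : C(X, X)} (hσ : m.map σ = m) (f g : X →ᵇ ℝ) :
    m.mulForm (f.compContinuous σ) (g.compContinuous σ) = m.mulForm f g :=
  DFunLike.congr_fun hσ (f * g)

lemma isPosSemidef_mulForm (m : Mean X) : m.mulForm.IsPosSemidef := by
  refine LinearMap.BilinForm.isPosSemidef_def.2 ⟨⟨fun f g => ?_⟩, ⟨fun f => ?_⟩⟩
  · simp [mulForm_apply, mul_comm]
  · exact m.map_nonneg fun x => mul_self_nonneg (f x)

end Mean

section Folner

variable {A : Type*} [AddCommGroup A]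

lemma abs_sum_add_sub_sum_le {f : A → ℝ} {C : ℝ} (hf : ∀ x, |f x| ≤ C) (s : Finset A) (a : A) :
    |∑ x ∈ s, f (x + a) - ∑ x ∈ s, f x| ≤ 2 * C * (s.card - (s ∩ s.image (· + a)).card) := by
  have hcard : (s.image (· + a)).card = s.card :=
    Finset.card_image_of_injective _ (add_left_injective a)
  have bound (t : Finset A) : |∑ x ∈ t, f x| ≤ C * t.card := by
    calc |∑ x ∈ t, f x| ≤ ∑ x ∈ t, |f x| := Finset.abs_sum_le_sum_abs _ _
      _ ≤ C * t.card := by simpa [mul_comm] using Finset.sum_le_card_nsmul t _ C fun x _ => hf x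
  have hsdiff : ((s \ s.image (· + a)).card : ℝ) = s.card - (s ∩ s.image (· + a)).card := by
    rw [eq_sub_iff_add_eq]
    exact_mod_cast Finset.card_sdiff_add_card_inter _ _
  rw [← Finset.sum_image (g := (· + a)) (add_left_injective a).injOn,
    ← Finset.sum_sdiff_sub_sum_sdiff, ← hsdiff]
  have h₁ := bound (s.image (· + a) \ s)
  rw [Finset.card_sdiff_comm hcard] at h₁
  linarith [abs_sub (∑ x ∈ s.image (· + a) \ s, f x) (∑ x ∈ s \ s.image (· + a), f x),
    bound (s \ s.image (· + a))]

variable [TopologicalSpace A] [DiscreteTopology A]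

lemma IsAddFolner.tendsto_average_dirac_map_sub {F : ℕ → Finset A} (hF : IsAddFolner F) (a : A)
    (f : A →ᵇ ℝ) :
    Tendsto (fun n => (Mean.average (F n) (hF.1 n) Mean.dirac).map (.addRight a) f -
      Mean.average (F n) (hF.1 n) Mean.dirac f) atTop (𝓝 0) := by
  have hlim : Tendsto (fun n => 2 * ‖f‖ *
      (1 - ((F n ∩ (F n).image (· + a)).card : ℝ) / (F n).card)) atTop (𝓝 0) := by
    simpa using ((hF.2 a).const_sub 1).const_mul (2 * ‖f‖)
  refine squeeze_zero_norm (fun n => ?_) hlim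
  have hcard : (0 : ℝ) < (F n).card := Nat.cast_pos.2 (hF.1 n).card_pos
  rw [Mean.map_apply, Mean.average_apply, Mean.average_apply, ← sub_div, norm_div,
    Real.norm_natCast, Real.norm_eq_abs, div_le_iff₀ hcard]
  refine (abs_sum_add_sub_sum_le f.norm_coe_le_norm (F n) a).trans_eq ?_
  field_simp

lemma PosUpperBanachDensity.exists_mean {E : Set A} (hE : PosUpperBanachDensity E) :
    ∃ m : Mean A, (∀ a, m.map (.addRight a) = m) ∧ 0 < m (.indicator E (isClopen_discrete E)) := by
  obtain ⟨F, hF, hlim⟩ := hE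
  let avg (n : ℕ) : Mean A := Mean.average (F n) (hF.1 n) Mean.dirac
  have havg (n : ℕ) : avg n (.indicator E (isClopen_discrete E)) =
      ((F n).filter (· ∈ E)).card / (F n).card := by
    simp [avg, Set.indicator_apply]
  obtain ⟨c, hc, hcE⟩ := exists_between hlim
  have hfreq : ∃ᶠ n in atTop, c < avg n (.indicator E (isClopen_discrete E)) := by
    simp only [havg]
    exact frequently_lt_of_lt_limsup (isCoboundedUnder_le_of_le atTop fun n => by positivity) hcE
  obtain ⟨U, hU⟩ := exists_ultrafilter_iff.2 (frequently_mem_iff_neBot.1 hfreq)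
  obtain ⟨hU, hUc⟩ := le_inf_iff.1 hU
  obtain ⟨m, hm⟩ := Mean.exists_tendsto U avg
  have hcm : c ≤ m (.indicator E (isClopen_discrete E)) := by
    refine ge_of_tendsto (hm _) ?_
    filter_upwards [le_principal_iff.1 hUc] with n hn using le_of_lt hn
  exact ⟨m, fun a => Mean.map_eq_of_tendsto hm fun f =>
    (hF.tendsto_average_dirac_map_sub a f).mono_left hU, hc.trans_le hcm⟩

end Folner

section HyperbolicRotation

variable {K : Type*} [Field K]

/-- The diagonal maps `(a, b) ↦ (ta, t⁻¹b)` of the plane, which preserve the form `ab`. -/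
def hyperbolicRotation (t : Kˣ) (p : K × K) : K × K := (t * p.1, ↑t⁻¹ * p.2)

lemma hyperbolicRotation_add (t : Kˣ) (p r : K × K) :
    hyperbolicRotation t (p + r) = hyperbolicRotation t p + hyperbolicRotation t r := by
  simp [hyperbolicRotation, mul_add]

lemma hyperbolicRotation_mul (s t : Kˣ) (p : K × K) :
    hyperbolicRotation (s * t) p = hyperbolicRotation s (hyperbolicRotation t p) := by
  simp [hyperbolicRotation, mul_assoc, mul_left_comm]

lemma hyperbolicRotation_zero (t : Kˣ) : hyperbolicRotation t (0 : K × K) = 0 := by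
  simp [hyperbolicRotation]

variable [TopologicalSpace K] [DiscreteTopology K]

/-- The indicator function of the set of pairs `(t, w)` for which the copy of `p` rotated by `t` and
translated by `w` lies in `E`. -/
noncomputable def copyIndicator (E : Set (K × K)) (p : K × K) : Kˣ × (K × K) →ᵇ ℝ :=
  .indicator {z | z.2 + hyperbolicRotation z.1 p ∈ E} (isClopen_discrete _)

variable {E : Set (K × K)} {M : Mean Kˣ} {m : Mean (K × K)}

lemma copyIndicator_nonneg (p : K × K) (z : Kˣ × (K × K)) : 0 ≤ copyIndicator E p z :=
  Set.indicator_nonneg (fun _ _ => zero_le_one) z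

lemma copyIndicator_le_one (p : K × K) (z : Kˣ × (K × K)) : copyIndicator E p z ≤ 1 :=
  Set.indicator_le_self' (fun _ _ => zero_le_one) z

lemma copyIndicator_ne_zero_iff {p : K × K} {z : Kˣ × (K × K)} :
    copyIndicator E p z ≠ 0 ↔ z.2 + hyperbolicRotation z.1 p ∈ E := by
  simp [copyIndicator]

lemma mulForm_copyIndicator_self_le (μ : Mean (Kˣ × (K × K))) (p : K × K) :
    μ.mulForm (copyIndicator E p) (copyIndicator E p) ≤ 1 :=
  (μ.mono fun z => mul_le_one₀ (copyIndicator_le_one p z) (copyIndicator_nonneg p z)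
    (copyIndicator_le_one p z)).trans_eq μ.map_one

lemma mulForm_copyIndicator_add (hm : ∀ r, m.map (.addRight r) = m) (p p' r : K × K) :
    (M.prod m).mulForm (copyIndicator E (p + r)) (copyIndicator E (p' + r)) =
      (M.prod m).mulForm (copyIndicator E p) (copyIndicator E p') := by
  let ρ : C(Kˣ × (K × K), Kˣ × (K × K)) :=
    ⟨fun z => (z.1, z.2 + hyperbolicRotation z.1 r), continuous_of_discreteTopology⟩
  have hρ : (M.prod m).map ρ = M.prod m :=
    Mean.map_prod_eq_of_skew (fun _ _ => rfl) (σ := .id Kˣ) rfl fun t => hm (hyperbolicRotation t r)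
  have hcomp (p : K × K) : copyIndicator E (p + r) = (copyIndicator E p).compContinuous ρ := by
    ext z
    simp [copyIndicator, Set.indicator_apply, ρ,
      hyperbolicRotation_add, add_assoc, add_comm (hyperbolicRotation z.1 p)]
  rw [hcomp, hcomp, Mean.mulForm_compContinuous hρ]

lemma mulForm_copyIndicator_hyperbolicRotation (hM : ∀ g, M.map (.mulRight g) = M) (p p' : K × K)
    (g : Kˣ) :
    (M.prod m).mulForm (copyIndicator E (hyperbolicRotation g p))
        (copyIndicator E (hyperbolicRotation g p')) =
      (M.prod m).mulForm (copyIndicator E p) (copyIndicator E p') := by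
  have hρ : (M.prod m).map (.prodMap (.mulRight g) (.id (K × K))) = M.prod m :=
    Mean.map_prod_eq_of_skew (fun _ _ => rfl) (hM g) (τ := fun _ => .id _) fun _ => rfl
  have hcomp (p : K × K) : copyIndicator E (hyperbolicRotation g p) =
      (copyIndicator E p).compContinuous (.prodMap (.mulRight g) (.id (K × K))) := by
    ext z
    simp [copyIndicator, Set.indicator_apply, hyperbolicRotation_mul]
  rw [hcomp, hcomp, Mean.mulForm_compContinuous hρ]

lemma hasHyperbolicGram_copyIndicator (hM : ∀ g, M.map (.mulRight g) = M)
    (hm : ∀ r, m.map (.addRight r) = m) :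
    HasHyperbolicGram (M.prod m).mulForm (copyIndicator E)
      fun s => (M.prod m).mulForm (copyIndicator E (1, s)) (copyIndicator E 0) := by
  intro p p' hp
  let g : Kˣ := Units.mk0 (p.1 - p'.1) (sub_ne_zero.2 hp)
  have hg : hyperbolicRotation g (1, (p.1 - p'.1) * (p.2 - p'.2)) = p - p' := by
    simp [hyperbolicRotation, g, sub_ne_zero.2 hp, Prod.ext_iff]
  have h := mulForm_copyIndicator_add (E := E) (M := M) hm (p - p') 0 p'
  rw [sub_add_cancel, zero_add] at h
  have hrot := mulForm_copyIndicator_hyperbolicRotation (E := E) (m := m) hM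
    (1, (p.1 - p'.1) * (p.2 - p'.2)) 0 g
  rw [hg, hyperbolicRotation_zero] at hrot
  exact h.trans hrot

lemma mulForm_copyIndicator_one (hm : ∀ r, m.map (.addRight r) = m) (p : K × K) :
    (M.prod m).mulForm (copyIndicator E p) 1 = m (.indicator E (isClopen_discrete E)) := by
  have hfib : m.fiberwise (copyIndicator E p) =
      m (.indicator E (isClopen_discrete E)) • (1 : Kˣ →ᵇ ℝ) := by
    ext t
    have hslice : (copyIndicator E p).compContinuous (.prodMk (.const _ t) (.id _)) =
        (BoundedContinuousFunction.indicator E (isClopen_discrete E)).compContinuous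
          (.addRight (hyperbolicRotation t p)) := rfl
    rw [Mean.fiberwise_apply, hslice, ← Mean.map_apply, hm]
    simp
  rw [Mean.mulForm_apply, mul_one, Mean.prod_apply, hfib, map_smul, Mean.map_one, smul_eq_mul,
    mul_one]

variable [Infinite K]

lemma exists_sub_mul_sub_eq_of_apply_indicator_pos (hm : ∀ r, m.map (.addRight r) = m)
    (hE : 0 < m (.indicator E (isClopen_discrete E))) (q : K) :
    ∃ p ∈ E, ∃ p' ∈ E, (p'.1 - p.1) * (p'.2 - p.2) = q := by
  rcases eq_or_ne q 0 with rfl | hq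
  · obtain ⟨p, hp⟩ := Mean.exists_pos_of_apply_pos hE
    have hp : p ∈ E := Set.mem_of_indicator_ne_zero hp.ne'
    exact ⟨p, hp, p, hp, by simp⟩
  obtain ⟨M, hM⟩ := Mean.exists_forall_map_mulRight_eq Kˣ
  have hsq := (hasHyperbolicGram_copyIndicator hM hm).sq_le_mul_apply_self
    (M.prod m).isPosSemidef_mulForm (mulForm_copyIndicator_self_le _) hE.le
    (fun p => (mulForm_copyIndicator_one hm p).ge) hq
  have hone : (M.prod m).mulForm 1 1 = 1 := by simp [Mean.mulForm_apply]
  rw [hone, mul_one] at hsq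
  obtain ⟨z, hz⟩ := Mean.exists_pos_of_apply_pos (m := M.prod m)
    (f := copyIndicator E (1, q) * copyIndicator E 0) ((pow_pos hE 2).trans_le hsq)
  exact ⟨_, copyIndicator_ne_zero_iff.1 (right_ne_zero_of_mul hz.ne'), _,
    copyIndicator_ne_zero_iff.1 (left_ne_zero_of_mul hz.ne'), by simp [hyperbolicRotation]⟩

lemma exists_forall_sub_mul_sub_eq_of_apply_indicator_pos (hm : ∀ r, m.map (.addRight r) = m)
    (hE : 0 < m (.indicator E (isClopen_discrete E))) (Q : Finset K) :
    ∃ p ∈ E, ∀ q ∈ Q, ∃ p' ∈ E, (p'.1 - p.1) * (p'.2 - p.2) = q := by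
  let bad (q : K) : Set (K × K) := {p ∈ E | ∀ p' ∈ E, (p'.1 - p.1) * (p'.2 - p.2) ≠ q}
  have hbad (q : K) : m (.indicator (bad q) (isClopen_discrete _)) ≤ 0 := by
    by_contra! hpos
    obtain ⟨p, hp, p', hp', hq⟩ := exists_sub_mul_sub_eq_of_apply_indicator_pos hm hpos q
    exact hp.2 p' hp'.1 hq
  obtain ⟨p, hp⟩ : ∃ p, 0 < (BoundedContinuousFunction.indicator E (isClopen_discrete E) -
      ∑ q ∈ Q, BoundedContinuousFunction.indicator (bad q) (isClopen_discrete _)) p := by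
    refine Mean.exists_pos_of_apply_pos (m := m) ?_
    rw [map_sub, map_sum]
    linarith [Finset.sum_nonpos fun q (_ : q ∈ Q) => hbad q]
  have hlt : ∑ q ∈ Q, (bad q).indicator (1 : K × K → ℝ) p < E.indicator 1 p := by
    simpa using hp
  have hnonneg (q : K) : 0 ≤ (bad q).indicator (1 : K × K → ℝ) p :=
    Set.indicator_nonneg (fun _ _ => zero_le_one) p
  have hpE : p ∈ E :=
    Set.mem_of_indicator_ne_zero ((Finset.sum_nonneg fun q _ => hnonneg q).trans_lt hlt).ne'
  refine ⟨p, hpE, fun q hq => ?_⟩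
  by_contra! hne
  have hpq : p ∈ bad q := ⟨hpE, hne⟩
  have hle := Finset.single_le_sum (fun q _ => hnonneg q) hq
  rw [Set.indicator_of_mem hpE] at hlt
  rw [Set.indicator_of_mem hpq] at hle
  exact hlt.not_ge hle

end HyperbolicRotation

lemma PosUpperBanachDensity.exists_forall_sub_mul_sub_eq {K : Type*} [Field K] [Infinite K]
    {A B : Set K} (hA : PosUpperBanachDensity A) (hB : PosUpperBanachDensity B) (Q : Finset K) :
    ∃ a ∈ A, ∃ b ∈ B, ∀ q ∈ Q, ∃ a' ∈ A, ∃ b' ∈ B, (a' - a) * (b' - b) = q := by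
  let _ : TopologicalSpace K := ⊥
  have _ : DiscreteTopology K := ⟨rfl⟩
  obtain ⟨mA, invA, posA⟩ := hA.exists_mean
  obtain ⟨mB, invB, posB⟩ := hB.exists_mean
  obtain ⟨p, hp, h⟩ := exists_forall_sub_mul_sub_eq_of_apply_indicator_pos
    (Mean.map_addRight_prod_eq invA invB)
    ((mul_pos posA posB).trans_eq (Mean.prod_indicator_prod mA mB _ _).symm) Q
  refine ⟨p.1, hp.1, p.2, hp.2, fun q hq => ?_⟩
  obtain ⟨p', hp', hq⟩ := h q hq
  exact ⟨p'.1, hp'.1, p'.2, hp'.2, hq⟩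

/-- For sets `A, B ⊆ K` of positive upper Banach density, every finite `Q ⊆ K` satisfies
`Q ⊆ (A − a_Q)·(B − b_Q)` for some `(a_Q, b_Q) ∈ A × B`; in particular
`K = (A − A)·(B − B)`. -/
theorem statement11
    {K : Type*} [Field K] [Countable K] [Infinite K]
    (A B : Set K) (hA : PosUpperBanachDensity A) (hB : PosUpperBanachDensity B) :
    (∀ Q : Finset K, ∃ a ∈ A, ∃ b ∈ B,
        (Q : Set K) ⊆ ((fun x => x - a) '' A) * ((fun x => x - b) '' B)) ∧
      (A - A) * (B - B) = Set.univ := by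
  have main := hA.exists_forall_sub_mul_sub_eq hB
  constructor
  · intro Q
    obtain ⟨a, ha, b, hb, h⟩ := main Q
    refine ⟨a, ha, b, hb, fun q hq => ?_⟩
    obtain ⟨a', ha', b', hb', hq'⟩ := h q hq
    exact Set.mem_mul.2 ⟨a' - a, ⟨a', ha', rfl⟩, b' - b, ⟨b', hb', rfl⟩, hq'⟩
  · refine Set.eq_univ_of_forall fun q => ?_
    obtain ⟨a, ha, b, hb, h⟩ := main {q}
    obtain ⟨a', ha', b', hb', hq'⟩ := h q (Finset.mem_singleton_self q)
    exact Set.mem_mul.2 ⟨a' - a, Set.sub_mem_sub ha' ha, b' - b, Set.sub_mem_sub hb' hb, hq'⟩
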